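/- arXiv:2408.04122 — 2 statements merged into one kernel-verified Lean document; each statement's English description precedes it below -/
import Mathlib

section
/- Let t > 0 and s, w ∈ ℝ, and set ρ := t·(s + 1 − w). Define Φ : ℝ → ℝ by Φ(β) = (ρ − 1)·exp(t·(β − w)) + 1. Then for every β ≥ w one has Φ(β) = t·( s + ∫_w^β Φ(u) du + 1 − β ). In particular, for every β ≥ w at which the denominator is positive, the ratio Φ(β) / ( s + ∫_w^β Φ(u) du + 1 − β ) equals t. -/
/-- The exponential threshold function satisfies the profile constraint [β] with equality. -/
theorem stmt_0 (t s w : ℝ) (ht : 0 < t)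
    (ρ : ℝ) (hρ : ρ = t * (s + 1 - w))
    (Φ : ℝ → ℝ) (hΦ : ∀ β, Φ β = (ρ - 1) * Real.exp (t * (β - w)) + 1) :
    (∀ β, w ≤ β → Φ β = t * (s + (∫ u in w..β, Φ u) + 1 - β)) ∧
    (∀ β, w ≤ β → 0 < s + (∫ u in w..β, Φ u) + 1 - β →
      Φ β / (s + (∫ u in w..β, Φ u) + 1 - β) = t) := by
  have key : ∀ β, Φ β = t * (s + (∫ u in w..β, Φ u) + 1 - β) := by
    intro β
    have hcont : Continuous Φ := by
      rw [funext hΦ]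
      fun_prop
    have hder : ∀ x ∈ Set.uIcc w β,
        HasDerivAt (fun u => (ρ - 1) / t * Real.exp (t * (u - w)) + u) (Φ x) x := by
      intro x _
      have h1 : HasDerivAt (fun u : ℝ => t * (u - w)) (t * 1) x :=
        ((hasDerivAt_id x).sub_const w).const_mul t
      have h2 := ((h1.exp).const_mul ((ρ - 1) / t)).add (hasDerivAt_id x)
      refine h2.congr_deriv ?_
      rw [hΦ]
      field_simp
    rw [intervalIntegral.integral_eq_sub_of_hasDerivAt hder (hcont.intervalIntegrable _ _), hΦ]
    simp only [sub_self, mul_zero, Real.exp_zero]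
    field_simp
    linear_combination hρ
  refine ⟨fun β _ => key β, fun β _ hpos => ?_⟩
  rw [div_eq_iff hpos.ne']
  exact key β
end

section
/- Let r > 0, p ∈ ℝ, and s, w₀, w ∈ ℝ, and define Φ(β) = ( r·( s + 1 − p·w₀ + w·(p − 1) ) − 1 )·exp( r·(β − w) ) + 1. Then for every β ≥ w one has Φ(β) = r·( s + p·(w − w₀) + ∫_w^β Φ(u) du + 1 − β ). -/
/-- The exponential threshold function of Ada-PO satisfies constraint [β] of problem O_i
with equality. -/
theorem stmt_8 (r p s w0 w : ℝ) (hr : 0 < r)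
    (Φ : ℝ → ℝ)
    (hΦ : ∀ β, Φ β = (r * (s + 1 - p * w0 + w * (p - 1)) - 1) * Real.exp (r * (β - w)) + 1) :
    ∀ β, w ≤ β →
      Φ β = r * (s + p * (w - w0) + (∫ u in w..β, Φ u) + 1 - β) := by
  intro β _
  obtain ⟨C, hC⟩ : ∃ C, C = r * (s + 1 - p * w0 + w * (p - 1)) - 1 := ⟨_, rfl⟩
  rw [← hC] at hΦ
  have hfun : Φ = fun u => C * Real.exp (r * (u - w)) + 1 := funext hΦ
  have hint : (∫ u in w..β, Φ u) =
      (C / r * Real.exp (r * (β - w)) + β) - (C / r * Real.exp (r * (w - w)) + w) := by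
    apply intervalIntegral.integral_eq_sub_of_hasDerivAt
      (f := fun u => C / r * Real.exp (r * (u - w)) + u)
    · intro x _
      have h1 : HasDerivAt (fun u : ℝ => r * (u - w)) (r * 1) x :=
        ((hasDerivAt_id x).sub_const w).const_mul r
      have h2 := (h1.exp.const_mul (C / r)).add (hasDerivAt_id x)
      rw [hΦ x]
      have h3 : C * Real.exp (r * (x - w)) + 1
          = C / r * (Real.exp (r * (x - w)) * (r * 1)) + 1 := by
        field_simp
      rw [h3]
      exact h2
    · rw [hfun]
      apply Continuous.intervalIntegrable
      fun_prop
  rw [hint, hΦ β, sub_self, mul_zero, Real.exp_zero]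
  field_simp
  rw [hC]
  ring
end
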